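/- Let n, d₁, d₂, d₃ ≥ 1 and μ, M₁, M₂ ∈ ℝ. Let a : ℝⁿ × ℝ^{d₁} → ℂ be smooth with |∂_x^γ ∂_{ξ′}^α a(x,ξ′)| ≤ C_{α,γ} ⟨ξ′⟩^{μ−|α|} for all arguments and multi-indices, and let b : ℝⁿ × ℝ^{d₂} × ℝ^{d₃} → ℂ be smooth with |∂_x^γ ∂_{ξ″}^β ∂_{ξ‴}^η b(x,ξ″,ξ‴)| ≤ C_{β,η,γ} ⟨(ξ″,ξ‴)⟩^{M₁−|β|} ⟨ξ‴⟩^{M₂−|η|} for all arguments and multi-indices, where ⟨·⟩ := (1+|·|²)^{1/2}. Then for all multi-indices there are constants C′ such that for all (x, ξ′, ξ″, ξ‴) with |(ξ″,ξ‴)| ≤ |ξ′|: |∂_x^γ ∂_{ξ′}^α ∂_{ξ″}^β ∂_{ξ‴}^η (a(x,ξ′) b(x,ξ″,ξ‴))| ≤ C′ ⟨(ξ′,ξ″,ξ‴)⟩^{μ−|α|} ⟨(ξ″,ξ‴)⟩^{M₁−|β|} ⟨ξ‴⟩^{M₂−|η|}. -/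

import Mathlib

set_option synthInstance.maxHeartbeats 1000000
set_option maxHeartbeats 1000000

/-- The Japanese bracket `⟨v⟩ = (1 + |v|²)^{1/2}`. -/
noncomputable def jap {d : ℕ} (v : EuclideanSpace ℝ (Fin d)) : ℝ :=
  Real.sqrt (1 + ‖v‖ ^ 2)

/-- The Japanese bracket of a pair. -/
noncomputable def jap2 {d e : ℕ} (u : EuclideanSpace ℝ (Fin d))
    (v : EuclideanSpace ℝ (Fin e)) : ℝ :=
  Real.sqrt (1 + ‖u‖ ^ 2 + ‖v‖ ^ 2)

/-- The Japanese bracket of a triple. -/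
noncomputable def jap3 {d e f : ℕ} (u : EuclideanSpace ℝ (Fin d))
    (v : EuclideanSpace ℝ (Fin e)) (w : EuclideanSpace ℝ (Fin f)) : ℝ :=
  Real.sqrt (1 + ‖u‖ ^ 2 + ‖v‖ ^ 2 + ‖w‖ ^ 2)

/-!
Differentiation in `ξ′` does not see `b` and differentiation in `ξ″, ξ‴` does not see `a`, so
`∂_ξ′^α ∂_ξ″^β ∂_ξ‴^η (a b)` is again a bilinear expression, in `∂_ξ′^α a` and `∂_ξ″^β ∂_ξ‴^η b`.
The Leibniz rule in `x` then bounds the mixed derivatives of the product by the product of the two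
symbol estimates. Where `|(ξ″, ξ‴)| ≤ c |ξ′|`, the brackets `⟨ξ′⟩` and `⟨(ξ′, ξ″, ξ‴)⟩` differ by at
most the factor `√(1 + c²)`, so that their powers, of either sign, are comparable.
-/

theorem rpow_le_max_one_rpow_neg_mul_rpow {x y K : ℝ} (hx : 0 < x) (hxy : x ≤ y)
    (hyx : y ≤ K * x) (s : ℝ) : x ^ s ≤ max 1 (K ^ (-s)) * y ^ s := by
  have hy : 0 < y := hx.trans_le hxy
  rcases le_total 0 s with hs | hs
  · calc x ^ s ≤ 1 * y ^ s := by rw [one_mul]; exact Real.rpow_le_rpow hx.le hxy hs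
      _ ≤ max 1 (K ^ (-s)) * y ^ s := by gcongr; exact le_max_left _ _
  · have hK : 0 < K := pos_of_mul_pos_left (hy.trans_le hyx) hx.le
    calc x ^ s = K ^ (-s) * (K * x) ^ s := by
          rw [Real.mul_rpow hK.le hx.le, ← mul_assoc, ← Real.rpow_add hK, neg_add_cancel,
            Real.rpow_zero, one_mul]
      _ ≤ K ^ (-s) * y ^ s := by
          gcongr ?_ * ?_
          exact Real.rpow_le_rpow_of_nonpos hy hyx hs
      _ ≤ max 1 (K ^ (-s)) * y ^ s := by gcongr; exact le_max_right _ _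

theorem sqrt_one_add_sq_add_sq_le {c r s t : ℝ} (h : √(s ^ 2 + t ^ 2) ≤ c * r) :
    √(1 + r ^ 2 + s ^ 2 + t ^ 2) ≤ √(1 + c ^ 2) * √(1 + r ^ 2) := by
  have hst : s ^ 2 + t ^ 2 ≤ (c * r) ^ 2 := Real.sqrt_le_iff.1 h |>.2
  rw [← Real.sqrt_mul (by positivity)]
  exact Real.sqrt_le_sqrt (by nlinarith [sq_nonneg c])

theorem rpow_sqrt_one_add_sq_le {c r s t : ℝ} (h : √(s ^ 2 + t ^ 2) ≤ c * r) (m : ℝ) :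
    √(1 + r ^ 2) ^ m ≤ max 1 (√(1 + c ^ 2) ^ (-m)) * √(1 + r ^ 2 + s ^ 2 + t ^ 2) ^ m :=
  rpow_le_max_one_rpow_neg_mul_rpow (by positivity)
    (Real.sqrt_le_sqrt (by nlinarith [sq_nonneg s, sq_nonneg t])) (sqrt_one_add_sq_add_sq_le h) m

theorem sum_choose_mul_mul_le {n : ℕ} {p q A D : ℕ → ℝ} {v w : ℝ} (hp₀ : ∀ i, 0 ≤ p i)
    (hq₀ : ∀ i, 0 ≤ q i) (hp : ∀ i, p i ≤ A i * v) (hq : ∀ i, q i ≤ D i * w) :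
    ∑ i ∈ Finset.range (n + 1), (n.choose i : ℝ) * p i * q (n - i) ≤
      (∑ i ∈ Finset.range (n + 1), (n.choose i : ℝ) * A i * D (n - i)) * (v * w) := by
  rw [Finset.sum_mul]
  refine Finset.sum_le_sum fun i _ => ?_
  calc (n.choose i : ℝ) * p i * q (n - i) = n.choose i * (p i * q (n - i)) := mul_assoc _ _ _
    _ ≤ n.choose i * ((A i * v) * (D (n - i) * w)) := by
        gcongr
        exacts [hq₀ _, (hp₀ i).trans (hp i), hp i, hq _]
    _ = n.choose i * A i * D (n - i) * (v * w) := by ring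

section Symbols

open scoped ContDiff

set_option maxSynthPendingDepth 3

variable {𝕜 X E E₁ E₂ E₃ F G H : Type*} [NontriviallyNormedField 𝕜]
  [NormedAddCommGroup X] [NormedSpace 𝕜 X] [NormedAddCommGroup E] [NormedSpace 𝕜 E]
  [NormedAddCommGroup E₁] [NormedSpace 𝕜 E₁] [NormedAddCommGroup E₂] [NormedSpace 𝕜 E₂]
  [NormedAddCommGroup E₃] [NormedSpace 𝕜 E₃] [NormedAddCommGroup F] [NormedSpace 𝕜 F]
  [NormedAddCommGroup G] [NormedSpace 𝕜 G] [NormedAddCommGroup H] [NormedSpace 𝕜 H]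

theorem contDiff_iteratedFDeriv_snd {f : X → E → G} {m n : WithTop ℕ∞} {k : ℕ}
    (hf : ContDiff 𝕜 m fun p : X × E => f p.1 p.2) (hmn : n + k ≤ m) :
    ContDiff 𝕜 n fun p : X × E => iteratedFDeriv 𝕜 k (f p.1) p.2 := by
  induction k generalizing n with
  | zero =>
    simp only [iteratedFDeriv_zero_eq_comp, Function.comp_def]
    exact (continuousMultilinearCurryFin0 𝕜 E G).symm.contDiff.comp
      (hf.of_le (by simpa using hmn))
  | succ k ih =>
    have hk : ContDiff 𝕜 (n + 1) fun p : X × E => iteratedFDeriv 𝕜 k (f p.1) p.2 :=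
      ih (by rwa [add_assoc, add_comm 1, ← Nat.cast_succ])
    simp only [iteratedFDeriv_succ_eq_comp_left, Function.comp_def]
    refine (continuousMultilinearCurryLeftEquiv 𝕜 (fun _ : Fin (k + 1) => E)
      G).symm.contDiff.comp ?_
    exact ContDiff.fderiv_succ (f := fun (p : X × E) y => iteratedFDeriv 𝕜 k (f p.1) y)
      (hk.comp ((contDiff_fst.comp contDiff_fst).prodMk contDiff_snd)) contDiff_snd

/-- The extension of a bilinear map `B` to `E`-multilinear maps in its second argument:
`(u, T) ↦ B u ∘ T`. It expresses the derivatives of `y ↦ B u (g y)` through those of `g`. -/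
noncomputable def bilinearExtendRight (B : F →L[𝕜] G →L[𝕜] H) (E : Type*) [NormedAddCommGroup E]
    [NormedSpace 𝕜 E] (n : ℕ) : F →L[𝕜] (E [×n]→L[𝕜] G) →L[𝕜] (E [×n]→L[𝕜] H) :=
  (ContinuousLinearMap.compContinuousMultilinearMapL 𝕜 (fun _ : Fin n => E) G H).comp B

/-- The extension of a bilinear map `B` to `E`-multilinear maps in its first argument:
`(T, v) ↦ B (T ·) v`. It expresses the derivatives of `y ↦ B (f y) v` through those of `f`. -/
noncomputable def bilinearExtendLeft (B : F →L[𝕜] G →L[𝕜] H) (E : Type*) [NormedAddCommGroup E]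
    [NormedSpace 𝕜 E] (n : ℕ) : (E [×n]→L[𝕜] F) →L[𝕜] G →L[𝕜] (E [×n]→L[𝕜] H) :=
  (bilinearExtendRight B.flip E n).flip

theorem norm_bilinearExtendRight_le (B : F →L[𝕜] G →L[𝕜] H) (n : ℕ) :
    ‖bilinearExtendRight B E n‖ ≤ ‖B‖ :=
  ContinuousLinearMap.opNorm_le_bound _ (norm_nonneg B) fun u =>
    ContinuousLinearMap.opNorm_le_bound _ (by positivity) fun T =>
      (ContinuousLinearMap.norm_compContinuousMultilinearMap_le (B u) T).trans
        (by gcongr; exact B.le_opNorm u)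

theorem norm_bilinearExtendLeft_le (B : F →L[𝕜] G →L[𝕜] H) (n : ℕ) :
    ‖bilinearExtendLeft B E n‖ ≤ ‖B‖ := by
  simpa only [bilinearExtendLeft, ContinuousLinearMap.opNorm_flip] using
    norm_bilinearExtendRight_le B.flip n

theorem iteratedFDeriv_bilinear_right (B : F →L[𝕜] G →L[𝕜] H) (u : F) {g : E → G} {n : ℕ}
    {y : E} (hg : ContDiffAt 𝕜 n g y) :
    iteratedFDeriv 𝕜 n (fun z => B u (g z)) y =
      bilinearExtendRight B E n u (iteratedFDeriv 𝕜 n g y) :=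
  (B u).iteratedFDeriv_comp_left hg le_rfl

theorem iteratedFDeriv_bilinear_left (B : F →L[𝕜] G →L[𝕜] H) (v : G) {f : E → F} {n : ℕ}
    {y : E} (hf : ContDiffAt 𝕜 n f y) :
    iteratedFDeriv 𝕜 n (fun z => B (f z) v) y =
      bilinearExtendLeft B E n (iteratedFDeriv 𝕜 n f y) v :=
  iteratedFDeriv_bilinear_right B.flip v hf

theorem iteratedFDeriv_iteratedFDeriv_iteratedFDeriv_bilinear (B : F →L[𝕜] G →L[𝕜] H)
    {f : E₁ → F} {g : E₂ → E₃ → G} {α β η : ℕ} (hf : ContDiff 𝕜 α f)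
    (hg : ContDiff 𝕜 (β + η) fun p : E₂ × E₃ => g p.1 p.2) (ξ₁ : E₁) (ξ₂ : E₂) (ξ₃ : E₃) :
    iteratedFDeriv 𝕜 α (fun ξ₁ => iteratedFDeriv 𝕜 β (fun ξ₂ =>
        iteratedFDeriv 𝕜 η (fun ξ₃ => B (f ξ₁) (g ξ₂ ξ₃)) ξ₃) ξ₂) ξ₁ =
      bilinearExtendLeft (bilinearExtendRight (bilinearExtendRight B E₃ η) E₂ β) E₁ α
        (iteratedFDeriv 𝕜 α f ξ₁)
        (iteratedFDeriv 𝕜 β (fun ξ₂ => iteratedFDeriv 𝕜 η (g ξ₂) ξ₃) ξ₂) := by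
  have hg₃ (ξ₂ : E₂) : ContDiff 𝕜 η (g ξ₂) :=
    (hg.comp (contDiff_prodMk_right ξ₂)).of_le le_add_self
  have hg₂ : ContDiff 𝕜 β fun ξ₂ => iteratedFDeriv 𝕜 η (g ξ₂) ξ₃ :=
    (contDiff_iteratedFDeriv_snd hg le_rfl).comp (contDiff_prodMk_left ξ₃)
  simp only [iteratedFDeriv_bilinear_right B _ (hg₃ _).contDiffAt,
    iteratedFDeriv_bilinear_right (bilinearExtendRight B E₃ η) _ hg₂.contDiffAt,
    iteratedFDeriv_bilinear_left _ _ hf.contDiffAt]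

theorem contDiff_iteratedFDeriv_iteratedFDeriv {g : X → E₂ → E₃ → G}
    (hg : ContDiff 𝕜 ∞ fun p : X × E₂ × E₃ => g p.1 p.2.1 p.2.2) (β η : ℕ) (ξ₂ : E₂) (ξ₃ : E₃) :
    ContDiff 𝕜 ∞ fun x => iteratedFDeriv 𝕜 β (fun ξ₂ => iteratedFDeriv 𝕜 η (g x ξ₂) ξ₃) ξ₂ := by
  have hη : ContDiff 𝕜 ∞ fun q : (X × E₂) × E₃ => iteratedFDeriv 𝕜 η (g q.1.1 q.1.2) q.2 :=
    contDiff_iteratedFDeriv_snd (f := fun q : X × E₂ => g q.1 q.2)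
      (hg.comp (LinearIsometryEquiv.prodAssoc 𝕜 X E₂ E₃).contDiff) (by exact_mod_cast le_top)
  have hβ : ContDiff 𝕜 ∞ fun p : X × E₂ =>
      iteratedFDeriv 𝕜 β (fun ξ₂ => iteratedFDeriv 𝕜 η (g p.1 ξ₂) ξ₃) p.2 :=
    contDiff_iteratedFDeriv_snd (f := fun x ξ₂ => iteratedFDeriv 𝕜 η (g x ξ₂) ξ₃)
      (hη.comp (contDiff_prodMk_left ξ₃)) (by exact_mod_cast le_top)
  exact hβ.comp (contDiff_prodMk_left ξ₂)

theorem norm_mixed_iteratedFDeriv_bilinear_le (B : F →L[𝕜] G →L[𝕜] H) {f : X → E₁ → F}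
    {g : X → E₂ → E₃ → G} (hf : ContDiff 𝕜 ∞ fun p : X × E₁ => f p.1 p.2)
    (hg : ContDiff 𝕜 ∞ fun p : X × E₂ × E₃ => g p.1 p.2.1 p.2.2) (γ α β η : ℕ)
    (x : X) (ξ₁ : E₁) (ξ₂ : E₂) (ξ₃ : E₃) :
    ‖iteratedFDeriv 𝕜 γ (fun x => iteratedFDeriv 𝕜 α (fun ξ₁ => iteratedFDeriv 𝕜 β (fun ξ₂ =>
        iteratedFDeriv 𝕜 η (fun ξ₃ => B (f x ξ₁) (g x ξ₂ ξ₃)) ξ₃) ξ₂) ξ₁) x‖ ≤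
      ‖B‖ * ∑ i ∈ Finset.range (γ + 1), (γ.choose i : ℝ) *
        ‖iteratedFDeriv 𝕜 i (fun x => iteratedFDeriv 𝕜 α (f x) ξ₁) x‖ *
        ‖iteratedFDeriv 𝕜 (γ - i) (fun x =>
          iteratedFDeriv 𝕜 β (fun ξ₂ => iteratedFDeriv 𝕜 η (g x ξ₂) ξ₃) ξ₂) x‖ := by
  have hfα : ContDiff 𝕜 ∞ fun x => iteratedFDeriv 𝕜 α (f x) ξ₁ :=
    (contDiff_iteratedFDeriv_snd hf (by exact_mod_cast le_top)).comp (contDiff_prodMk_left ξ₁)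
  have hgβη := contDiff_iteratedFDeriv_iteratedFDeriv hg β η ξ₂ ξ₃
  have hfx (x : X) : ContDiff 𝕜 α (f x) :=
    (hf.comp (contDiff_prodMk_right x)).of_le (by exact_mod_cast le_top)
  have hgx (x : X) : ContDiff 𝕜 (β + η) fun p : E₂ × E₃ => g x p.1 p.2 :=
    (hg.comp (contDiff_prodMk_right x)).of_le (by exact_mod_cast le_top)
  simp only [iteratedFDeriv_iteratedFDeriv_iteratedFDeriv_bilinear B (hfx _) (hgx _)]
  refine (ContinuousLinearMap.norm_iteratedFDeriv_le_of_bilinear _ hfα hgβη x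
    (by exact_mod_cast le_top)).trans ?_
  gcongr
  exact (norm_bilinearExtendLeft_le _ α).trans <|
    (norm_bilinearExtendRight_le _ β).trans (norm_bilinearExtendRight_le B η)

variable (𝕜)

/-- `a (x, ξ)` is a symbol of order `m`, with estimates uniform in `x`. A derivative of order `k` is
encoded by the `k`-th iterated Fréchet derivative, whose norm controls all partial derivatives with
multi-index of length `k`. -/
def IsSymbol (m : ℝ) (a : X → E → F) : Prop :=
  ContDiff 𝕜 ∞ (fun p : X × E => a p.1 p.2) ∧
    ∀ γ α : ℕ, ∃ C : ℝ, ∀ x ξ,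
      ‖iteratedFDeriv 𝕜 γ (fun x => iteratedFDeriv 𝕜 α (a x) ξ) x‖ ≤
        C * √(1 + ‖ξ‖ ^ 2) ^ (m - α)

/-- `b (x, σ, τ)` is a symbol-valued symbol of order `(m₁, m₂)`: it has order `m₁` in `(σ, τ)` and
order `m₂` in `τ`. -/
def IsSymbolValuedSymbol (m₁ m₂ : ℝ) (b : X → E₂ → E₃ → G) : Prop :=
  ContDiff 𝕜 ∞ (fun p : X × E₂ × E₃ => b p.1 p.2.1 p.2.2) ∧
    ∀ γ β η : ℕ, ∃ C : ℝ, ∀ x σ τ,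
      ‖iteratedFDeriv 𝕜 γ (fun x => iteratedFDeriv 𝕜 β (fun σ =>
          iteratedFDeriv 𝕜 η (b x σ) τ) σ) x‖ ≤
        C * √(1 + ‖σ‖ ^ 2 + ‖τ‖ ^ 2) ^ (m₁ - β) * √(1 + ‖τ‖ ^ 2) ^ (m₂ - η)

/-- `c (x, θ, σ, τ)` satisfies on the set `S` of covectors the estimates of a triple symbol-valued
symbol of order `(m₁, m₂, m₃)`. The derivatives are those of `c` on the whole space, so that `S`
need not be open. -/
def TripleSymbolEstimatesOn (m₁ m₂ m₃ : ℝ) (S : Set (E₁ × E₂ × E₃))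
    (c : X → E₁ → E₂ → E₃ → H) : Prop :=
  ∀ γ α β η : ℕ, ∃ C : ℝ, ∀ x θ σ τ, (θ, σ, τ) ∈ S →
    ‖iteratedFDeriv 𝕜 γ (fun x => iteratedFDeriv 𝕜 α (fun θ => iteratedFDeriv 𝕜 β (fun σ =>
        iteratedFDeriv 𝕜 η (c x θ σ) τ) σ) θ) x‖ ≤
      C * √(1 + ‖θ‖ ^ 2 + ‖σ‖ ^ 2 + ‖τ‖ ^ 2) ^ (m₁ - α) *
        √(1 + ‖σ‖ ^ 2 + ‖τ‖ ^ 2) ^ (m₂ - β) * √(1 + ‖τ‖ ^ 2) ^ (m₃ - η)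

variable {𝕜}

theorem stmt11_general (B : F →L[𝕜] G →L[𝕜] H) {μ M₁ M₂ : ℝ} {a : X → E₁ → F}
    {b : X → E₂ → E₃ → G} (ha : IsSymbol 𝕜 μ a) (hb : IsSymbolValuedSymbol 𝕜 M₁ M₂ b) (c : ℝ) :
    TripleSymbolEstimatesOn 𝕜 μ M₁ M₂
      {ξ : E₁ × E₂ × E₃ | √(‖ξ.2.1‖ ^ 2 + ‖ξ.2.2‖ ^ 2) ≤ c * ‖ξ.1‖}
      fun x θ σ τ => B (a x θ) (b x σ τ) := by
  intro γ α β η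
  choose Ca hCa using fun i => ha.2 i α
  choose Cb hCb using fun i => hb.2 i β η
  set K : ℝ := max 1 (√(1 + c ^ 2) ^ (-(μ - α)))
  refine ⟨‖B‖ * ∑ i ∈ Finset.range (γ + 1), (γ.choose i : ℝ) * (|Ca i| * K) * Cb (γ - i),
    fun x θ σ τ hξ => ?_⟩
  have ha_triple (i : ℕ) : ‖iteratedFDeriv 𝕜 i (fun x => iteratedFDeriv 𝕜 α (a x) θ) x‖ ≤
      |Ca i| * K * √(1 + ‖θ‖ ^ 2 + ‖σ‖ ^ 2 + ‖τ‖ ^ 2) ^ (μ - α) :=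
    calc _ ≤ Ca i * √(1 + ‖θ‖ ^ 2) ^ (μ - α) := hCa i x θ
      _ ≤ |Ca i| * (K * √(1 + ‖θ‖ ^ 2 + ‖σ‖ ^ 2 + ‖τ‖ ^ 2) ^ (μ - α)) := by
          gcongr
          exacts [le_abs_self _, rpow_sqrt_one_add_sq_le hξ _]
      _ = _ := (mul_assoc _ _ _).symm
  have hb_bound (i : ℕ) : ‖iteratedFDeriv 𝕜 i (fun x =>
      iteratedFDeriv 𝕜 β (fun σ => iteratedFDeriv 𝕜 η (b x σ) τ) σ) x‖ ≤
      Cb i * (√(1 + ‖σ‖ ^ 2 + ‖τ‖ ^ 2) ^ (M₁ - β) * √(1 + ‖τ‖ ^ 2) ^ (M₂ - η)) :=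
    (hCb i x σ τ).trans_eq (mul_assoc _ _ _)
  have h_sum := sum_choose_mul_mul_le (n := γ) (fun _ => norm_nonneg _) (fun _ => norm_nonneg _)
    ha_triple hb_bound
  exact (norm_mixed_iteratedFDeriv_bilinear_le B ha.1 hb.1 γ α β η x θ σ τ).trans <|
    (mul_le_mul_of_nonneg_left h_sum (norm_nonneg B)).trans_eq (by ring)

end Symbols

/-- Product of a symbol of order `μ` in `ξ′` and a symbol-valued symbol of order
`(M₁,M₂)` in `(ξ″,ξ‴)` is a triple symbol-valued symbol of order `(μ,M₁,M₂)` on the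
region `|(ξ″,ξ‴)| ≤ |ξ′|`. -/
theorem stmt11 (n d₁ d₂ d₃ : ℕ) (hn : 1 ≤ n) (hd₁ : 1 ≤ d₁) (hd₂ : 1 ≤ d₂)
    (hd₃ : 1 ≤ d₃) (μ M₁ M₂ : ℝ)
    (a : EuclideanSpace ℝ (Fin n) → EuclideanSpace ℝ (Fin d₁) → ℂ)
    (b : EuclideanSpace ℝ (Fin n) → EuclideanSpace ℝ (Fin d₂) →
      EuclideanSpace ℝ (Fin d₃) → ℂ)
    (ha_smooth : ContDiff ℝ (⊤ : ℕ∞)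
      (fun p : EuclideanSpace ℝ (Fin n) × EuclideanSpace ℝ (Fin d₁) => a p.1 p.2))
    (hb_smooth : ContDiff ℝ (⊤ : ℕ∞)
      (fun p : EuclideanSpace ℝ (Fin n) × EuclideanSpace ℝ (Fin d₂) ×
          EuclideanSpace ℝ (Fin d₃) => b p.1 p.2.1 p.2.2))
    (ha : ∀ γ α : ℕ, ∃ C : ℝ, ∀ x ξ',
      ‖iteratedFDeriv ℝ γ (fun x => iteratedFDeriv ℝ α (fun ξ' => a x ξ') ξ') x‖ ≤
        C * jap ξ' ^ (μ - (α : ℝ)))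
    (hb : ∀ γ β η : ℕ, ∃ C : ℝ, ∀ x ξ'' ξ''',
      ‖iteratedFDeriv ℝ γ (fun x => iteratedFDeriv ℝ β (fun ξ'' =>
          iteratedFDeriv ℝ η (fun ξ''' => b x ξ'' ξ''') ξ''') ξ'') x‖ ≤
        C * jap2 ξ'' ξ''' ^ (M₁ - (β : ℝ)) * jap ξ''' ^ (M₂ - (η : ℝ))) :
    ∀ γ α β η : ℕ, ∃ C' : ℝ, ∀ x ξ' ξ'' ξ''',
      Real.sqrt (‖ξ''‖ ^ 2 + ‖ξ'''‖ ^ 2) ≤ ‖ξ'‖ →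
      ‖iteratedFDeriv ℝ γ (fun x => iteratedFDeriv ℝ α (fun ξ' =>
          iteratedFDeriv ℝ β (fun ξ'' => iteratedFDeriv ℝ η (fun ξ''' =>
            a x ξ' * b x ξ'' ξ''') ξ''') ξ'') ξ') x‖ ≤
        C' * jap3 ξ' ξ'' ξ''' ^ (μ - (α : ℝ)) * jap2 ξ'' ξ''' ^ (M₁ - (β : ℝ)) *
          jap ξ''' ^ (M₂ - (η : ℝ)) := by
  intro γ α β η
  obtain ⟨C, hC⟩ := stmt11_general (ContinuousLinearMap.mul ℝ ℂ) ⟨ha_smooth, ha⟩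
    ⟨hb_smooth, hb⟩ 1 γ α β η
  exact ⟨C, fun x ξ' ξ'' ξ''' hξ => hC x ξ' ξ'' ξ''' (by simpa using hξ)⟩
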